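/- Let V be a real vector space, K ⊆ V a convex set, F a face of K, and x ∈ K. Then x ∈ ri(F) if and only if F = F_K(x). In particular, for points x, y ∈ K one has x ∈ ri(F_K(y)) if and only if F_K(y) = F_K(x). -/

import Mathlib

variable {V : Type*} [AddCommGroup V] [Module ℝ V]

/-- `E` is an extreme subset of `K`: whenever a point of `E` is written as
`(1-l)•y + l•z` with `y, z ∈ K` and `l ∈ (0,1)`, both `y` and `z` lie in `E`. -/
def IsExtremeSubset (K E : Set V) : Prop :=
  E ⊆ K ∧ ∀ x ∈ E, ∀ y ∈ K, ∀ z ∈ K, ∀ l : ℝ, l ∈ Set.Ioo (0:ℝ) 1 →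
    x = (1 - l) • y + l • z → y ∈ E ∧ z ∈ E

/-- `F` is a face of `K`: a convex extreme subset of `K`. -/
def IsFaceOf (K F : Set V) : Prop := Convex ℝ F ∧ IsExtremeSubset K F

/-- The face of `K` generated by `x`: the smallest face of `K` containing `x`
(the intersection of all faces of `K` containing `x`). -/
def genFace (K : Set V) (x : V) : Set V := ⋂₀ {F | IsFaceOf K F ∧ x ∈ F}

/-- The relative algebraic interior of `C`: all `x ∈ C` such that for every
`y` in the affine hull of `C` there is `ε > 0` with `x ± ε(y - x) ∈ C`. -/
def riSet (C : Set V) : Set V :=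
  {x | x ∈ C ∧ ∀ y ∈ affineSpan ℝ C, ∃ ε : ℝ, 0 < ε ∧
    x + ε • (y - x) ∈ C ∧ x - ε • (y - x) ∈ C}

/-
For a convex set `C` and `x ∈ C`, the points `y ∈ C` such that the segment from `y` to `x` can be
prolonged in `C` beyond `x` form a face of `C`. When `C` is the face of `K` generated by `x`, this
is a face of `K` too, so by minimality it is all of `C`: every direction pointing from `x` into `C`
is then also feasible with the opposite sign, the cone of feasible directions is a linear subspace,
and `x ∈ ri C`. Conversely, if `x ∈ ri C` with `C ⊆ K`, then every point of `C` is an endpoint of a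
segment in `K` through `x`, so every extreme subset of `K` containing `x` contains `C`; hence two
extreme subsets of `K` with a common relative interior point coincide.
-/

section FeasibleCone

variable {𝕜 W : Type*} [Field 𝕜] [LinearOrder 𝕜] [IsStrictOrderedRing 𝕜]
  [AddCommGroup W] [Module 𝕜 W] {K B C : Set W} {x y v : W}

theorem add_smul_mem_of_le (hC : Convex 𝕜 C) (hx : x ∈ C) {δ ε : 𝕜} (hε : x + ε • v ∈ C)
    (hδ : 0 ≤ δ) (hδε : δ ≤ ε) : x + δ • v ∈ C := by
  have hε₀ : 0 ≤ ε := hδ.trans hδε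
  have hmem := hC.add_smul_mem hx hε ⟨div_nonneg hδ hε₀, div_le_one_of_le₀ hδε hε₀⟩
  rwa [smul_smul, div_mul_cancel_of_imp fun h ↦ le_antisymm (h ▸ hδε) hδ] at hmem

variable (𝕜 C x) in
/-- The cone of feasible directions of `C` at `x`, encoded as the conical hull of `C - x`. If `C` is
convex and contains `x`, it consists of the `v` with `x + ε • v ∈ C` for some `ε > 0`. -/
def feasibleCone : PointedCone 𝕜 W :=
  PointedCone.hull 𝕜 ((· - x) '' C)

theorem sub_mem_feasibleCone (hy : y ∈ C) : y - x ∈ feasibleCone 𝕜 C x :=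
  PointedCone.subset_hull (Set.mem_image_of_mem _ hy)

theorem exists_add_smul_mem_of_mem_feasibleCone (hC : Convex 𝕜 C) (hx : x ∈ C)
    (hv : v ∈ feasibleCone 𝕜 C x) : ∃ ε : 𝕜, 0 < ε ∧ x + ε • v ∈ C := by
  have hconvex : Convex 𝕜 ((· - x) '' C) := by
    simpa only [sub_eq_neg_add] using hC.translate (-x)
  have hpointed : (ConvexCone.hull 𝕜 ((· - x) '' C)).Pointed :=
    ConvexCone.subset_hull ⟨x, hx, sub_self x⟩
  have hle : feasibleCone 𝕜 C x ≤ (ConvexCone.hull 𝕜 ((· - x) '' C)).toPointedCone hpointed :=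
    Submodule.span_le.2 ConvexCone.subset_hull
  obtain ⟨r, hr, _, ⟨y, hy, rfl⟩, rfl⟩ := (ConvexCone.mem_hull_of_convex hconvex).1 (hle hv)
  exact ⟨r⁻¹, inv_pos.2 hr, by simpa [smul_smul, hr.ne'] using hy⟩

theorem vectorSpan_le_lineal_feasibleCone (hx : x ∈ C)
    (h : ∀ y ∈ C, x - y ∈ feasibleCone 𝕜 C x) :
    vectorSpan 𝕜 C ≤ (feasibleCone 𝕜 C x).lineal := by
  rw [vectorSpan_eq_span_vsub_set_right 𝕜 hx, Submodule.span_le]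
  rintro _ ⟨y, hy, rfl⟩
  exact ⟨sub_mem_feasibleCone hy, by simpa using h y hy⟩

variable (𝕜 C x) in
/-- The points `y` of a convex set `C` such that the segment from `y` to `x` can be prolonged in `C`
beyond `x`. This is the explicit description of the face of `C` generated by `x`. -/
def prolongableSet : Set W :=
  {y ∈ C | x - y ∈ feasibleCone 𝕜 C x}

theorem self_mem_prolongableSet (hx : x ∈ C) : x ∈ prolongableSet 𝕜 C x :=
  ⟨hx, sub_mem_feasibleCone hx⟩

theorem convex_prolongableSet (hC : Convex 𝕜 C) : Convex 𝕜 (prolongableSet 𝕜 C x) :=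
  hC.inter <| (feasibleCone 𝕜 C x).convex.affine_preimage (AffineMap.const 𝕜 W x - AffineMap.id 𝕜 W)

theorem isExtreme_prolongableSet : IsExtreme 𝕜 C (prolongableSet 𝕜 C x) := by
  refine ⟨Set.sep_subset _ _, ?_⟩
  rintro y hy z hz _ ⟨-, hw⟩ ⟨a, b, ha, hb, hab, rfl⟩
  have hscaled : a • (x - y) ∈ feasibleCone 𝕜 C x := by
    have hcomb : a • (x - y) = (x - (a • y + b • z)) + b • (z - x) := by
      obtain rfl : b = 1 - a := by linarith
      module
    rw [hcomb]
    exact add_mem hw ((feasibleCone 𝕜 C x).smul_mem hb.le (sub_mem_feasibleCone hz))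
  refine ⟨hy, ?_⟩
  simpa [smul_smul, ha.ne'] using (feasibleCone 𝕜 C x).smul_mem (inv_nonneg.2 ha.le) hscaled

theorem mem_of_isExtreme_of_sub_smul_mem (hB : IsExtreme 𝕜 K B) (hx : x ∈ B) (hy : y ∈ K) {ε : 𝕜}
    (hε : 0 < ε) (h : x - ε • (y - x) ∈ K) : y ∈ B := by
  refine hB.left_mem_of_mem_openSegment hy h hx
    ⟨ε / (1 + ε), 1 / (1 + ε), by positivity, by positivity, by field_simp; ring, ?_⟩
  match_scalars <;> field_simp <;> ring

end FeasibleCone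

section GeneratedFace

variable {K E F C : Set V} {x : V}

theorem isExtremeSubset_iff_isExtreme : IsExtremeSubset K E ↔ IsExtreme ℝ K E := by
  constructor
  · rintro ⟨hEK, h⟩
    refine ⟨hEK, ?_⟩
    rintro y hy z hz w hw ⟨a, b, ha, hb, hab, rfl⟩
    obtain rfl : a = 1 - b := by linarith
    exact (h _ hw y hy z hz b ⟨hb, by linarith⟩ rfl).1
  · intro h
    refine ⟨h.subset, fun w hw y hy z hz l hl hwyz ↦ ?_⟩
    have hseg : w ∈ openSegment ℝ y z := ⟨1 - l, l, sub_pos.2 hl.2, hl.1, by ring, hwyz.symm⟩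
    exact ⟨h.left_mem_of_mem_openSegment hy hz hw hseg,
      h.right_mem_of_mem_openSegment hy hz hw hseg⟩

theorem isFaceOf_self (hK : Convex ℝ K) : IsFaceOf K K :=
  ⟨hK, isExtremeSubset_iff_isExtreme.2 .rfl⟩

theorem IsFaceOf.trans (hF : IsFaceOf K F) (hG : IsFaceOf F G) : IsFaceOf K G :=
  ⟨hG.1, isExtremeSubset_iff_isExtreme.2 <|
    (isExtremeSubset_iff_isExtreme.1 hF.2).trans (isExtremeSubset_iff_isExtreme.1 hG.2)⟩

theorem isFaceOf_prolongableSet (hC : Convex ℝ C) : IsFaceOf C (prolongableSet ℝ C x) :=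
  ⟨convex_prolongableSet hC, isExtremeSubset_iff_isExtreme.2 isExtreme_prolongableSet⟩

theorem self_mem_genFace (K : Set V) (x : V) : x ∈ genFace K x :=
  fun _ hF ↦ hF.2

theorem genFace_subset (hF : IsFaceOf K F) (hx : x ∈ F) : genFace K x ⊆ F :=
  Set.sInter_subset_of_mem ⟨hF, hx⟩

-- If no face of `K` contains `x`, then `genFace K x` is the empty intersection `Set.univ`.
theorem isFaceOf_genFace (h : ∃ G, IsFaceOf K G ∧ x ∈ G) : IsFaceOf K (genFace K x) :=
  ⟨convex_sInter fun _ hF ↦ hF.1.1, isExtremeSubset_iff_isExtreme.2 <|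
    isExtreme_sInter h fun _ hF ↦ isExtremeSubset_iff_isExtreme.1 hF.1.2⟩

theorem mem_riSet_of_forall_sub_mem_feasibleCone (hC : Convex ℝ C) (hx : x ∈ C)
    (h : ∀ y ∈ C, x - y ∈ feasibleCone ℝ C x) : x ∈ riSet C := by
  refine ⟨hx, fun y hy ↦ ?_⟩
  have hdir : y - x ∈ vectorSpan ℝ C :=
    vsub_mem_vectorSpan_of_mem_affineSpan_of_mem_affineSpan hy (mem_affineSpan ℝ hx)
  obtain ⟨hpos, hneg⟩ := vectorSpan_le_lineal_feasibleCone hx h hdir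
  obtain ⟨δ, hδ, hδC⟩ := exists_add_smul_mem_of_mem_feasibleCone hC hx hpos
  obtain ⟨η, hη, hηC⟩ := exists_add_smul_mem_of_mem_feasibleCone hC hx hneg
  have hmin : 0 < min δ η := lt_min hδ hη
  refine ⟨min δ η, hmin, add_smul_mem_of_le hC hx hδC hmin.le (min_le_left _ _), ?_⟩
  rw [sub_eq_add_neg, ← smul_neg]
  exact add_smul_mem_of_le hC hx hηC hmin.le (min_le_right _ _)

theorem mem_riSet_genFace (h : ∃ G, IsFaceOf K G ∧ x ∈ G) : x ∈ riSet (genFace K x) := by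
  have hface := isFaceOf_genFace h
  have hx := self_mem_genFace K x
  have hsub : genFace K x ⊆ prolongableSet ℝ (genFace K x) x :=
    genFace_subset (hface.trans (isFaceOf_prolongableSet hface.1)) (self_mem_prolongableSet hx)
  exact mem_riSet_of_forall_sub_mem_feasibleCone hface.1 hx fun y hy ↦ (hsub hy).2

theorem subset_of_mem_riSet (hE : IsExtremeSubset K E) (hxE : x ∈ E) (hCK : C ⊆ K)
    (hxC : x ∈ riSet C) : C ⊆ E := by
  intro y hy
  obtain ⟨ε, hε, -, hεC⟩ := hxC.2 y (mem_affineSpan ℝ hy)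
  exact mem_of_isExtreme_of_sub_smul_mem (isExtremeSubset_iff_isExtreme.1 hE) hxE (hCK hy) hε
    (hCK hεC)

theorem eq_of_mem_riSet (hE : IsExtremeSubset K E) (hF : IsExtremeSubset K F)
    (hxE : x ∈ riSet E) (hxF : x ∈ riSet F) : E = F :=
  (subset_of_mem_riSet hF hxF.1 hE.1 hxE).antisymm (subset_of_mem_riSet hE hxE.1 hF.1 hxF)

theorem mem_riSet_iff_eq_genFace (hE : IsExtremeSubset K E) (hx : ∃ G, IsFaceOf K G ∧ x ∈ G) :
    x ∈ riSet E ↔ E = genFace K x :=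
  ⟨fun h ↦ eq_of_mem_riSet hE (isFaceOf_genFace hx).2 h (mem_riSet_genFace hx),
    fun h ↦ h ▸ mem_riSet_genFace hx⟩

end GeneratedFace

theorem stmt7_general {K E : Set V} (hE : IsExtremeSubset K E) {x : V}
    (hx : ∃ G, IsFaceOf K G ∧ x ∈ G) :
    (x ∈ riSet E ↔ E = genFace K x) ∧
    ∀ y, (∃ G, IsFaceOf K G ∧ y ∈ G) →
      (x ∈ riSet (genFace K y) ↔ genFace K y = genFace K x) :=
  ⟨mem_riSet_iff_eq_genFace hE hx, fun _ hy ↦ mem_riSet_iff_eq_genFace (isFaceOf_genFace hy).2 hx⟩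

theorem stmt7 (K F : Set V) (hK : Convex ℝ K) (hF : IsFaceOf K F)
    (x : V) (hx : x ∈ K) :
    (x ∈ riSet F ↔ F = genFace K x) ∧
    (∀ y ∈ K, (x ∈ riSet (genFace K y) ↔ genFace K y = genFace K x)) := by
  obtain ⟨hface, hgen⟩ := stmt7_general hF.2 ⟨K, isFaceOf_self hK, hx⟩
  exact ⟨hface, fun y hy ↦ hgen y ⟨K, isFaceOf_self hK, hy⟩⟩
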